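/- Let n ≥ 6 and let K be any finite-index subgroup of Aut(F_n), the automorphism group of the free group on n generators. Then there is no injective group homomorphism φ from K into Diff²₊(I) whose image is fully supported, i.e., such that no nontrivial element of φ(K) fixes pointwise a nondegenerate interval (equivalently, Fix(φ(k)) has empty interior for every k with φ(k) ≠ id). -/

import Mathlib

/-- A permutation of `ℝ` representing an orientation-preserving C² diffeomorphism of
`I = [0,1]`: it is the identity off `[0,1]`, is C² on `[0,1]`, and has positive
(one-sided, at the endpoints) derivative on `[0,1]`. -/
def IsDiffI (f : Equiv.Perm ℝ) : Prop :=
  (∀ x, x ∉ Set.Icc (0 : ℝ) 1 → f x = x) ∧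
  ContDiffOn ℝ 2 f (Set.Icc 0 1) ∧
  ∀ x ∈ Set.Icc (0 : ℝ) 1, 0 < derivWithin f (Set.Icc 0 1) x

/-!
Two classical facts make the centralizer of a nontrivial element `f` commutative in any fully
supported group of C² diffeomorphisms of the interval. Kopell's lemma: if `a` and `b` commute and
`b` fixes a point moved by `a`, then all powers of `b` are Lipschitz, with a common constant, on an
interval between that point and its image, which forces `b` to be the identity there. With full
support, commuting nontrivial elements therefore have the same fixed points, so an element of the
centralizer of `f` that fixes a point not fixed by `f` is trivial. Hölder's theorem: such an
action orders the centralizer in an Archimedean way, and an Archimedean ordered group is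
commutative.

In a finite-index subgroup of `Aut(Fₙ)` this fails: a power of the transvection `xᵢ ↦ xᵢ xⱼ`, which
fixes both `xⱼ` and `xᵢ xⱼ xᵢ⁻¹`, commutes with powers of the conjugations by these two elements,
and these powers do not commute with each other.
-/

open Set Filter Topology Function
open scoped NNReal

section ArchimedeanOrder

variable {G : Type*} [Group G] [LinearOrder G] [MulLeftMono G] [MulRightMono G]

lemma exists_zpow_le_and_lt_zpow_add_one {d : G} (hd : 1 < d) (harch : ∀ b : G, ∃ n : ℕ, b ≤ d ^ n)
    (g : G) : ∃ k : ℤ, d ^ k ≤ g ∧ g < d ^ (k + 1) := by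
  have hmono : StrictMono (fun k : ℤ => d ^ k) := strictMono_int_of_lt_succ fun k => by
    simpa only [zpow_add_one] using lt_mul_of_one_lt_right' (d ^ k) hd
  obtain ⟨N, hN⟩ := harch g
  obtain ⟨M, hM⟩ := harch g⁻¹
  have hbdd : ∃ b : ℤ, ∀ z : ℤ, d ^ z ≤ g → z ≤ b :=
    ⟨N, fun z hz => hmono.le_iff_le.1 (by simpa using hz.trans hN)⟩
  have hinh : ∃ z : ℤ, d ^ z ≤ g := ⟨-M, by simpa using inv_le_of_inv_le' hM⟩
  obtain ⟨k, hk, hmax⟩ := Int.exists_greatest_of_bdd hbdd hinh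
  exact ⟨k, hk, not_le.1 fun h => (lt_add_one k).not_ge (hmax _ h)⟩

lemma mem_zpowers_of_isLeast {d : G} (hd : IsLeast {e : G | 1 < e} d)
    (harch : ∀ b : G, ∃ n : ℕ, b ≤ d ^ n) (g : G) : g ∈ Subgroup.zpowers d := by
  obtain ⟨k, hle, hlt⟩ := exists_zpow_le_and_lt_zpow_add_one hd.1 harch g
  refine ⟨k, hle.antisymm (not_lt.1 fun h => hlt.not_ge ?_)⟩
  have hdle : d ≤ (d ^ k)⁻¹ * g := hd.2 (lt_inv_mul_iff_mul_lt.2 (by simpa using h))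
  simpa only [zpow_add_one] using le_inv_mul_iff_mul_le.1 hdle

lemma exists_one_lt_mul_self_le {c e : G} (he : 1 < e) (hec : e < c) :
    ∃ d : G, 1 < d ∧ d * d ≤ c := by
  rcases le_or_gt (e * e) c with h | h
  · exact ⟨e, he, h⟩
  · have hce : c * e⁻¹ < e := mul_inv_lt_iff_lt_mul.2 h
    refine ⟨c * e⁻¹, by simpa using mul_lt_mul_left hec e⁻¹, ?_⟩
    calc c * e⁻¹ * (c * e⁻¹) ≤ c * e⁻¹ * e := by gcongr
      _ = c := inv_mul_cancel_right c e

lemma mul_inv_lt_mul_self {d : G} (hd : 1 < d) (harch : ∀ b : G, ∃ n : ℕ, b ≤ d ^ n) (x y : G) :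
    y * x * (x * y)⁻¹ < d * d := by
  obtain ⟨m, hmx, hxm⟩ := exists_zpow_le_and_lt_zpow_add_one hd harch x
  obtain ⟨n, hny, hyn⟩ := exists_zpow_le_and_lt_zpow_add_one hd harch y
  refine mul_inv_lt_iff_lt_mul.2 ?_
  calc y * x < d ^ (n + 1) * d ^ (m + 1) := mul_lt_mul_of_lt_of_lt hyn hxm
    _ = d * d * (d ^ m * d ^ n) := by group
    _ ≤ d * d * (x * y) := by gcongr

/-- Hölder's theorem. -/
theorem commute_of_archimedean (harch : ∀ d : G, 1 < d → ∀ b : G, ∃ n : ℕ, b ≤ d ^ n) (x y : G) :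
    Commute x y := by
  by_cases hleast : ∃ d, IsLeast {e : G | 1 < e} d
  · obtain ⟨d, hd⟩ := hleast
    obtain ⟨i, rfl⟩ := mem_zpowers_of_isLeast hd (harch d hd.1) x
    obtain ⟨j, rfl⟩ := mem_zpowers_of_isLeast hd (harch d hd.1) y
    exact Commute.zpow_zpow_self d i j
  · have hle (x y : G) : y * x ≤ x * y := by
      by_contra! hlt
      have hc : 1 < y * x * (x * y)⁻¹ := lt_mul_inv_iff_mul_lt.2 (by simpa using hlt)
      obtain ⟨e, he, hec⟩ : ∃ e, 1 < e ∧ e < y * x * (x * y)⁻¹ := by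
        by_contra! h
        exact hleast ⟨_, hc, h⟩
      obtain ⟨d, hd, hdc⟩ := exists_one_lt_mul_self_le he hec
      exact hdc.not_gt (mul_inv_lt_mul_self hd (harch d hd) x y)
    exact (hle y x).antisymm (hle x y)

end ArchimedeanOrder

lemma exists_tendsto_iterate_isFixedPt {X : Type*} [ConditionallyCompleteLinearOrder X]
    [TopologicalSpace X] [OrderTopology X] {f : X → X} (hmono : Monotone f) (hcont : Continuous f)
    {b p : X} (hp : f p ≤ p) (hb : ∀ n : ℕ, b ≤ f^[n] p) :
    ∃ a ∈ Icc b p, IsFixedPt f a ∧ Tendsto (fun n : ℕ => f^[n] p) atTop (𝓝 a) := by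
  have hbdd : BddBelow (range fun n : ℕ => f^[n] p) := ⟨b, forall_mem_range.2 hb⟩
  have hlim := tendsto_atTop_ciInf (hmono.antitone_iterate_of_map_le hp) hbdd
  exact ⟨_, ⟨le_ciInf hb, ciInf_le hbdd 0⟩,
    isFixedPt_of_tendsto_iterate hlim hcont.continuousAt, hlim⟩

section OrderPreservingAction

section LinearOrder

variable {X C : Type*} [LinearOrder X] [Group C] [MulAction C X]

lemma notMem_fixedPoints_of_mem_uIcc (hmono : ∀ c : C, StrictMono (c • · : X → X)) {x y : X}
    (hx : x ∉ MulAction.fixedPoints C X) {k : C} (hy : y ∈ uIcc x (k • x)) :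
    y ∉ MulAction.fixedPoints C X := by
  intro hfix
  rcases lt_trichotomy x y with h | rfl | h
  · have hk : k • x < y := by simpa only [hfix k] using hmono k h
    exact (max_lt h hk).not_ge hy.2
  · exact hx hfix
  · have hk : y < k • x := by simpa only [hfix k] using hmono k h
    exact (lt_min h hk).not_ge hy.1

lemma smul_ne_of_mem_uIcc (hmono : ∀ c : C, StrictMono (c • · : X → X))
    (hstab : ∀ y ∉ MulAction.fixedPoints C X, MulAction.stabilizer C y = ⊥) {x y : X}
    (hx : x ∉ MulAction.fixedPoints C X) {k q : C} (hy : y ∈ uIcc x (k • x)) (hq : q ≠ 1) :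
    q • y ≠ y := fun h => hq <| by
  rw [← Subgroup.mem_bot, ← hstab y (notMem_fixedPoints_of_mem_uIcc hmono hx hy)]
  exact h

lemma continuous_smul_of_strictMono [TopologicalSpace X] [OrderTopology X] [DenselyOrdered X]
    (hmono : ∀ c : C, StrictMono (c • · : X → X)) (c : C) : Continuous (c • · : X → X) :=
  (hmono c).monotone.continuous_of_surjective (MulAction.surjective c)

end LinearOrder

variable {X : Type*} [ConditionallyCompleteLinearOrder X] [TopologicalSpace X] [OrderTopology X]
  [DenselyOrdered X] {C : Type*} [Group C] [MulAction C X]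

lemma smul_smul_lt_smul (hmono : ∀ c : C, StrictMono (c • · : X → X))
    (hstab : ∀ y ∉ MulAction.fixedPoints C X, MulAction.stabilizer C y = ⊥) {x : X}
    (hx : x ∉ MulAction.fixedPoints C X) {q : C} (hq : q • x < x) (k : C) :
    q • k • x < k • x := by
  by_contra! hle
  obtain ⟨y, hy, hfix⟩ := exists_mem_uIcc_isFixedPt
    (continuous_smul_of_strictMono hmono q).continuousOn hle hq.le
  rw [uIcc_comm] at hy
  exact smul_ne_of_mem_uIcc hmono hstab hx hy (by rintro rfl; simp at hq) hfix

lemma exists_smul_le_pow_smul (hmono : ∀ c : C, StrictMono (c • · : X → X))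
    (hstab : ∀ y ∉ MulAction.fixedPoints C X, MulAction.stabilizer C y = ⊥) {x : X}
    (hx : x ∉ MulAction.fixedPoints C X) {a : C} (ha : x < a • x) (b : C) :
    ∃ n : ℕ, b • x ≤ a ^ n • x := by
  by_contra! hlt
  have hinv : a⁻¹ • x < x := by simpa using hmono a⁻¹ ha
  have horbit (n : ℕ) : x ≤ (a⁻¹ • ·)^[n] (b • x) := by
    simpa only [smul_iterate_apply, inv_pow, smul_inv_smul, inv_smul_smul] using
      (hmono (a ^ n)⁻¹ (hlt n)).le
  obtain ⟨y, hy, hfix, -⟩ := exists_tendsto_iterate_isFixedPt (hmono a⁻¹).monotone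
    (continuous_smul_of_strictMono hmono a⁻¹) (smul_smul_lt_smul hmono hstab hx hinv b).le horbit
  exact smul_ne_of_mem_uIcc hmono hstab hx (Icc_subset_uIcc hy)
    (fun h => hinv.ne (by simp [h])) hfix

theorem commute_of_stabilizer_eq_bot (hmono : ∀ c : C, StrictMono (c • · : X → X))
    (hstab : ∀ y ∉ MulAction.fixedPoints C X, MulAction.stabilizer C y = ⊥) {x : X}
    (hx : x ∉ MulAction.fixedPoints C X) (g h : C) : Commute g h := by
  have hinj : Injective (fun c : C => c • x) := fun c d hcd => by
    have hmem : d⁻¹ * c ∈ MulAction.stabilizer C x := by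
      simpa [mul_smul, inv_smul_eq_iff] using hcd
    rw [hstab x hx, Subgroup.mem_bot] at hmem
    exact (inv_mul_eq_one.1 hmem).symm
  let _ : LinearOrder C := LinearOrder.lift' (fun c : C => c • x) hinj
  have : MulLeftMono C := ⟨fun k c d hcd => by
    change (k * c) • x ≤ (k * d) • x
    simpa only [mul_smul] using (hmono k).monotone (show c • x ≤ d • x from hcd)⟩
  have : MulRightMono C := ⟨fun k c d hcd => by
    rcases hcd.eq_or_lt with rfl | hlt
    · exact le_rfl
    · have hdown : (d⁻¹ * c) • x < x := by simpa [mul_smul] using hmono d⁻¹ hlt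
      have hk : c • k • x < d • k • x := by
        simpa [mul_smul] using hmono d (smul_smul_lt_smul hmono hstab hx hdown k)
      change (c * k) • x ≤ (d * k) • x
      simpa only [mul_smul] using hk.le⟩
  refine commute_of_archimedean (fun a (ha : (1 : C) • x < a • x) b => ?_) g h
  exact exists_smul_le_pow_smul hmono hstab hx (by simpa using ha) b

end OrderPreservingAction

section Calculus

lemma hasDerivWithinAt_eq_one_of_tendsto_isFixedPt {𝕜 ι : Type*} [NontriviallyNormedField 𝕜]
    {h : 𝕜 → 𝕜} {s : Set 𝕜} {a d : 𝕜} (hd : HasDerivWithinAt h d s a) {l : Filter ι} [l.NeBot]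
    {x : ι → 𝕜} (hx : Tendsto x l (𝓝[s \ {a}] a)) (hfix : ∀ i, IsFixedPt h (x i)) : d = 1 := by
  have ha : h a = a := tendsto_nhds_unique
    ((hd.continuousWithinAt.mono_left (nhdsWithin_mono a sdiff_subset)).comp hx)
    ((tendsto_nhds_of_tendsto_nhdsWithin hx).congr fun i => (hfix i).symm)
  refine tendsto_nhds_unique ((hasDerivWithinAt_iff_tendsto_slope.1 hd).comp hx)
    (tendsto_const_nhds.congr' ?_)
  filter_upwards [hx self_mem_nhdsWithin] with i hi
  rw [comp_apply, slope_def_field, ha, hfix i, div_self (sub_ne_zero.2 hi.2)]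

lemma exists_lipschitzOnWith_of_nnnorm_derivWithin_lt {F : Type*} [NormedAddCommGroup F]
    [NormedSpace ℝ F] {h : ℝ → F} {s : Set ℝ} {a : ℝ} (hh : ContDiffOn ℝ 1 h s) (hs : Convex ℝ s)
    (hU : UniqueDiffOn ℝ s) (ha : a ∈ s) {K : ℝ≥0} (hK : ‖derivWithin h s a‖₊ < K) :
    ∃ t ∈ 𝓝[s] a, LipschitzOnWith K h t := by
  refine hs.exists_nhdsWithin_lipschitzOnWith_of_hasFDerivWithinAt_of_nnnorm_lt
    (eventually_mem_nhdsWithin.mono fun y hy =>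
      (hh.differentiableOn one_ne_zero y hy).hasFDerivWithinAt)
    (hh.continuousOn_fderivWithin hU le_rfl a ha) K ?_
  rw [← NNReal.coe_lt_coe] at hK ⊢
  simpa only [coe_nnnorm, norm_derivWithin_eq_norm_fderivWithin] using hK

end Calculus

/-- Bounded distortion: on every subinterval `[a, b]` of `[0, 1]` the slopes of `f` agree up to
the factor `exp (L * (b - a))`. Slopes are cross-multiplied, which allows degenerate chords. -/
def HasBoundedDistortion (L : ℝ) (f : ℝ → ℝ) : Prop :=
  ∀ ⦃a b : ℝ⦄, Icc a b ⊆ Icc 0 1 → ∀ ⦃u v w z : ℝ⦄, a ≤ u → u ≤ v → v ≤ b → a ≤ w → w ≤ z → z ≤ b →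
    (f z - f w) * (v - u) ≤ Real.exp (L * (b - a)) * ((f v - f u) * (z - w))

namespace IsDiffI

variable {f : Equiv.Perm ℝ}

lemma mapsTo (hf : IsDiffI f) : MapsTo f (Icc 0 1) (Icc 0 1) := fun x hx => by
  by_contra hfx
  exact hfx (by rwa [f.injective (hf.1 _ hfx)])

lemma exists_sub_eq_derivWithin_mul (hf : IsDiffI f) {u v : ℝ} (huv : u ≤ v)
    (hsub : Icc u v ⊆ Icc 0 1) :
    ∃ c ∈ Icc u v, f v - f u = derivWithin f (Icc 0 1) c * (v - u) := by
  rcases huv.eq_or_lt with rfl | hlt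
  · exact ⟨u, left_mem_Icc.2 le_rfl, by simp⟩
  have hnhds {x : ℝ} (hx : x ∈ Ioo u v) : Icc (0 : ℝ) 1 ∈ 𝓝 x :=
    mem_of_superset (Icc_mem_nhds hx.1 hx.2) hsub
  obtain ⟨c, hc, hslope⟩ := exists_hasDerivAt_eq_slope f (derivWithin f (Icc 0 1)) hlt
    (hf.2.1.continuousOn.mono hsub) fun x hx =>
      ((hf.2.1.differentiableOn two_ne_zero x
        (hsub (Ioo_subset_Icc_self hx))).hasDerivWithinAt).hasDerivAt (hnhds hx)
  exact ⟨c, Ioo_subset_Icc_self hc, ((eq_div_iff (sub_ne_zero.2 hlt.ne')).1 hslope).symm⟩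

lemma strictMono (hf : IsDiffI f) : StrictMono f := by
  have hmonoOn : MonotoneOn f (Icc 0 1) := fun x hx y hy hxy => by
    obtain ⟨c, hc, heq⟩ := hf.exists_sub_eq_derivWithin_mul hxy (Icc_subset_Icc hx.1 hy.2)
    have hpos := hf.2.2 c ⟨hx.1.trans hc.1, hc.2.trans hy.2⟩
    nlinarith
  refine Monotone.strictMono_of_injective (fun x y hxy => ?_) f.injective
  by_cases hx : x ∈ Icc (0 : ℝ) 1 <;> by_cases hy : y ∈ Icc (0 : ℝ) 1
  · exact hmonoOn hx hy hxy
  · rw [hf.1 y hy]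
    exact (hf.mapsTo hx).2.trans (le_of_not_ge fun h => hy ⟨hx.1.trans hxy, h⟩)
  · rw [hf.1 x hx]
    exact (le_of_not_ge fun h => hx ⟨h, hxy.trans hy.2⟩).trans (hf.mapsTo hy).1
  · rwa [hf.1 x hx, hf.1 y hy]

lemma continuous (hf : IsDiffI f) : Continuous f :=
  hf.strictMono.monotone.continuous_of_surjective f.surjective

lemma exists_derivWithin_le_exp_mul (hf : IsDiffI f) : ∃ L : ℝ≥0,
    ∀ x ∈ Icc (0 : ℝ) 1, ∀ y ∈ Icc (0 : ℝ) 1,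
      derivWithin f (Icc 0 1) x ≤ Real.exp (L * |x - y|) * derivWithin f (Icc 0 1) y := by
  have hlog : ContDiffOn ℝ 1 (fun x => Real.log (derivWithin f (Icc 0 1) x)) (Icc 0 1) :=
    (hf.2.1.derivWithin (uniqueDiffOn_Icc zero_lt_one) (by norm_num)).log
      fun x hx => (hf.2.2 x hx).ne'
  obtain ⟨L, hL⟩ := hlog.exists_lipschitzOnWith one_ne_zero (convex_Icc 0 1) isCompact_Icc
  refine ⟨L, fun x hx y hy => ?_⟩
  have hdist := hL.dist_le_mul x hx y hy
  rw [Real.dist_eq, Real.dist_eq] at hdist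
  calc derivWithin f (Icc 0 1) x = Real.exp (Real.log (derivWithin f (Icc 0 1) x)) :=
        (Real.exp_log (hf.2.2 x hx)).symm
    _ ≤ Real.exp (L * |x - y| + Real.log (derivWithin f (Icc 0 1) y)) :=
        Real.exp_le_exp.2 (sub_le_iff_le_add.1 ((le_abs_self _).trans hdist))
    _ = Real.exp (L * |x - y|) * derivWithin f (Icc 0 1) y := by
        rw [Real.exp_add, Real.exp_log (hf.2.2 y hy)]

lemma exists_hasBoundedDistortion (hf : IsDiffI f) : ∃ L : ℝ≥0, HasBoundedDistortion L f := by
  obtain ⟨L, hL⟩ := hf.exists_derivWithin_le_exp_mul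
  refine ⟨L, fun a b hab u v w z hau huv hvb haw hwz hzb => ?_⟩
  obtain ⟨c, hc, hcuv⟩ :=
    hf.exists_sub_eq_derivWithin_mul huv ((Icc_subset_Icc hau hvb).trans hab)
  obtain ⟨d, hd, hdwz⟩ :=
    hf.exists_sub_eq_derivWithin_mul hwz ((Icc_subset_Icc haw hzb).trans hab)
  have hcab : c ∈ Icc a b := Icc_subset_Icc hau hvb hc
  have hdab : d ∈ Icc a b := Icc_subset_Icc haw hzb hd
  have hcpos := hf.2.2 c (hab hcab)
  have hder : derivWithin f (Icc 0 1) d ≤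
      Real.exp (L * (b - a)) * derivWithin f (Icc 0 1) c := by
    refine (hL d (hab hdab) c (hab hcab)).trans ?_
    gcongr
    exact abs_sub_le_of_le_of_le hdab.1 hdab.2 hcab.1 hcab.2
  calc (f z - f w) * (v - u)
      = derivWithin f (Icc 0 1) d * ((z - w) * (v - u)) := by
        rw [hdwz, mul_assoc]
    _ ≤ Real.exp (L * (b - a)) * derivWithin f (Icc 0 1) c * ((z - w) * (v - u)) :=
        mul_le_mul_of_nonneg_right hder (mul_nonneg (sub_nonneg.2 hwz) (sub_nonneg.2 huv))
    _ = Real.exp (L * (b - a)) * ((f v - f u) * (z - w)) := by rw [hcuv]; ring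

end IsDiffI

/- The intervals `[f^[k + 1] p, f^[k] p]` are disjoint, so the exponents sum to
`L * (p - f^[n] p)`. -/
lemma HasBoundedDistortion.iterate {L : ℝ} {f : ℝ → ℝ} (hL : HasBoundedDistortion L f)
    (hmono : StrictMono f) (hmaps : MapsTo f (Icc 0 1) (Icc 0 1)) {p : ℝ} (hp : p ∈ Icc (0 : ℝ) 1)
    {u v w z : ℝ} (hu : f p ≤ u) (huv : u < v) (hv : v ≤ p) (hw : f p ≤ w)
    (hwz : w ≤ z) (hz : z ≤ p) (n : ℕ) :
    (f^[n] z - f^[n] w) * (v - u) ≤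
      Real.exp (L * (p - f^[n] p)) * ((f^[n] v - f^[n] u) * (z - w)) := by
  induction n with
  | zero => simp [mul_comm]
  | succ n ih =>
    have hn := hmono.iterate n
    have hlow {t : ℝ} (ht : f p ≤ t) : f^[n + 1] p ≤ f^[n] t := hn.monotone ht
    have hstep := hL
      (Icc_subset_Icc (hmaps.iterate (n + 1) hp).1 (hmaps.iterate n hp).2)
      (hlow hu) (hn huv).le (hn.monotone hv) (hlow hw) (hn.monotone hwz) (hn.monotone hz)
    simp only [← iterate_succ_apply' f] at hstep
    have hpos : 0 < f^[n] v - f^[n] u := sub_pos.2 (hn huv)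
    have hpos' : 0 ≤ f^[n + 1] v - f^[n + 1] u := (sub_pos.2 (hmono.iterate (n + 1) huv)).le
    have hexp : Real.exp (L * (p - f^[n + 1] p)) =
        Real.exp (L * (f^[n] p - f^[n + 1] p)) * Real.exp (L * (p - f^[n] p)) := by
      rw [← Real.exp_add]; congr 1; ring
    refine le_of_mul_le_mul_right ?_ hpos
    calc (f^[n + 1] z - f^[n + 1] w) * (v - u) * (f^[n] v - f^[n] u)
        = (f^[n + 1] z - f^[n + 1] w) * (f^[n] v - f^[n] u) * (v - u) := by ring
      _ ≤ Real.exp (L * (f^[n] p - f^[n + 1] p)) *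
            ((f^[n + 1] v - f^[n + 1] u) * (f^[n] z - f^[n] w)) * (v - u) :=
          mul_le_mul_of_nonneg_right hstep (sub_pos.2 huv).le
      _ = Real.exp (L * (f^[n] p - f^[n + 1] p)) * (f^[n + 1] v - f^[n + 1] u) *
            ((f^[n] z - f^[n] w) * (v - u)) := by ring
      _ ≤ Real.exp (L * (f^[n] p - f^[n + 1] p)) * (f^[n + 1] v - f^[n + 1] u) *
            (Real.exp (L * (p - f^[n] p)) * ((f^[n] v - f^[n] u) * (z - w))) := by gcongr
      _ = Real.exp (L * (p - f^[n + 1] p)) * ((f^[n + 1] v - f^[n + 1] u) * (z - w)) *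
            (f^[n] v - f^[n] u) := by rw [hexp]; ring

lemma lipschitzOnWith_of_monotoneOn {h : ℝ → ℝ} {s : Set ℝ} {C : ℝ≥0} (hmono : MonotoneOn h s)
    (hle : ∀ u ∈ s, ∀ v ∈ s, u < v → h v - h u ≤ C * (v - u)) : LipschitzOnWith C h s := by
  refine .of_le_add_mul C fun u hu v hv => ?_
  rcases le_or_gt u v with huv | huv
  · exact (hmono hu hv huv).trans (le_add_of_nonneg_right (by positivity))
  · rw [Real.dist_eq, abs_of_pos (sub_pos.2 huv), ← sub_le_iff_le_add']
    exact hle v hv u hu huv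

lemma HasBoundedDistortion.iterate_sub_mul_le_of_commute {L : ℝ≥0} {f h : ℝ → ℝ}
    (hL : HasBoundedDistortion L f) (hf : StrictMono f) (hmaps : MapsTo f (Icc 0 1) (Icc 0 1))
    (hh : StrictMono h) (hcomm : Function.Commute h f) {p : ℝ} (hp : p ∈ Icc (0 : ℝ) 1)
    (hhp : h p = p) {u v : ℝ} (hu : u ∈ Icc (f p) p) (hv : v ∈ Icc (f p) p) (huv : u < v) (n : ℕ) :
    (f^[n] v - f^[n] u) * (h v - h u) ≤
      Real.exp L * ((h (f^[n] v) - h (f^[n] u)) * (v - u)) := by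
  have hhfp : h (f p) = f p := by rw [hcomm.eq, hhp]
  have hdist := hL.iterate hf hmaps hp (hhfp ▸ hh.monotone hu.1) (hh huv)
    (hhp ▸ hh.monotone hv.2) hu.1 huv.le hv.2 n
  rw [← (hcomm.iterate_right n).eq, ← (hcomm.iterate_right n).eq] at hdist
  have hnonneg : 0 ≤ (h (f^[n] v) - h (f^[n] u)) * (v - u) :=
    (mul_pos (sub_pos.2 (hh (hf.iterate n huv))) (sub_pos.2 huv)).le
  refine hdist.trans (mul_le_mul_of_nonneg_right (Real.exp_le_exp.2 ?_) hnonneg)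
  refine mul_le_of_le_one_right L.2 ?_
  linarith [hp.2, (hmaps.iterate n hp).1]

namespace IsDiffI

variable {f : Equiv.Perm ℝ} {p : ℝ}

lemma mem_Icc_of_apply_ne (hf : IsDiffI f) (hfp : f p ≠ p) : p ∈ Icc (0 : ℝ) 1 :=
  not_imp_comm.1 (hf.1 p) hfp

lemma exists_tendsto_iterate (hf : IsDiffI f) (hfp : f p < p) :
    ∃ a ∈ Icc (0 : ℝ) 1, ∀ u ∈ Icc (f p) p,
      Tendsto (fun n : ℕ => f^[n] u) atTop (𝓝[Icc 0 1 \ {a}] a) := by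
  have hp := hf.mem_Icc_of_apply_ne hfp.ne
  obtain ⟨a, ha, hfix, hlim⟩ := exists_tendsto_iterate_isFixedPt hf.strictMono.monotone
    hf.continuous hfp.le fun n => (hf.mapsTo.iterate n hp).1
  have hap : a < f p := by
    rw [← hfix.eq]
    exact hf.strictMono (ha.2.lt_of_ne (by rintro rfl; exact hfp.ne hfix))
  refine ⟨a, Icc_subset_Icc_right hp.2 ha, fun u hu => tendsto_nhdsWithin_iff.2 ⟨?_, ?_⟩⟩
  · exact tendsto_of_tendsto_of_tendsto_of_le_of_le (hlim.comp (tendsto_add_atTop_nat 1)) hlim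
      (fun n => (hf.strictMono.iterate n).monotone hu.1)
      (fun n => (hf.strictMono.iterate n).monotone hu.2)
  · have huI : u ∈ Icc (0 : ℝ) 1 := ⟨(hf.mapsTo hp).1.trans hu.1, hu.2.trans hp.2⟩
    refine .of_forall fun n => ⟨hf.mapsTo.iterate n huI, ?_⟩
    rw [mem_singleton_iff, ← ne_eq, ← (hfix.iterate n).eq]
    exact (hf.strictMono.iterate n (hap.trans_le hu.1)).ne'

lemma eventually_apply_iterate_sub_le_of_commute (hf : IsDiffI f) (hfp : f p < p) {h : ℝ → ℝ}
    (hh : ContDiffOn ℝ 1 h (Icc 0 1)) (hcomm : Function.Commute h f) (hhp : h p = p) {u v : ℝ}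
    (hu : u ∈ Icc (f p) p) (hv : v ∈ Icc (f p) p) (huv : u < v) :
    ∀ᶠ n in atTop, h (f^[n] v) - h (f^[n] u) ≤ 2 * (f^[n] v - f^[n] u) := by
  obtain ⟨a, ha, hlim⟩ := hf.exists_tendsto_iterate hfp
  have hder : derivWithin h (Icc 0 1) a = 1 :=
    hasDerivWithinAt_eq_one_of_tendsto_isFixedPt
      (hh.differentiableOn one_ne_zero a ha).hasDerivWithinAt (hlim p ⟨hfp.le, le_rfl⟩)
      fun n => ((hcomm.iterate_right n).eq p).trans (by rw [hhp])
  obtain ⟨t, ht, hlip⟩ := exists_lipschitzOnWith_of_nnnorm_derivWithin_lt hh (convex_Icc 0 1)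
    (uniqueDiffOn_Icc zero_lt_one) ha (K := 2) (by simp [hder])
  have hevent {x : ℝ} (hx : x ∈ Icc (f p) p) : ∀ᶠ n in atTop, f^[n] x ∈ t :=
    (hlim x hx).mono_right (nhdsWithin_mono a sdiff_subset) ht
  filter_upwards [hevent hu, hevent hv] with n hnu hnv
  have hdist := hlip.dist_le_mul _ hnv _ hnu
  rw [Real.dist_eq, Real.dist_eq, abs_of_pos (sub_pos.2 (hf.strictMono.iterate n huv))] at hdist
  exact (le_abs_self _).trans hdist

theorem exists_lipschitzOnWith_of_commute (hf : IsDiffI f) (hfp : f p < p) : ∃ C : ℝ≥0,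
    ∀ h : ℝ → ℝ, StrictMono h → ContDiffOn ℝ 1 h (Icc 0 1) → Function.Commute h f → h p = p →
      LipschitzOnWith C h (Icc (f p) p) := by
  have hp := hf.mem_Icc_of_apply_ne hfp.ne
  obtain ⟨L, hL⟩ := hf.exists_hasBoundedDistortion
  refine ⟨⟨Real.exp L * 2, by positivity⟩, fun h hmono hh hcomm hhp => ?_⟩
  refine lipschitzOnWith_of_monotoneOn (hmono.monotone.monotoneOn _) fun u hu v hv huv => ?_
  obtain ⟨n, hn⟩ :=
    (hf.eventually_apply_iterate_sub_le_of_commute hfp hh hcomm hhp hu hv huv).exists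
  refine le_of_mul_le_mul_left ?_ (sub_pos.2 (hf.strictMono.iterate n huv))
  calc (f^[n] v - f^[n] u) * (h v - h u)
      ≤ Real.exp L * ((h (f^[n] v) - h (f^[n] u)) * (v - u)) :=
        hL.iterate_sub_mul_le_of_commute hf.strictMono hf.mapsTo hmono hcomm hp hhp hu hv huv n
    _ ≤ Real.exp L * (2 * (f^[n] v - f^[n] u) * (v - u)) := by
        have := sub_pos.2 huv
        gcongr
    _ = (f^[n] v - f^[n] u) * (Real.exp L * 2 * (v - u)) := by ring

end IsDiffI

section UniformlyLipschitz

variable {X : Type*} [ConditionallyCompleteLinearOrder X] [DenselyOrdered X] [MetricSpace X]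
  [OrderTopology X] {g : Equiv.Perm X} {C : ℝ≥0} {a b : X}

/- If the powers of `g⁻¹` are uniformly Lipschitz, the distance from `u` to `g u` is controlled by
the distances between consecutive points of the orbit, which tend to `0`. -/
lemma apply_eq_self_of_apply_le_of_lipschitzOnWith (hmono : Monotone g) (ha : g a = a) {u : X}
    (hu : u ∈ Icc a b) (hgu : g u ≤ u)
    (hlip : ∀ n : ℕ, LipschitzOnWith C ⇑(g⁻¹ ^ n) (Icc a b)) : g u = u := by
  have hanti : Antitone fun n : ℕ => g^[n] u := hmono.antitone_iterate_of_map_le hgu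
  have horbit (n : ℕ) : a ≤ g^[n] u := by
    simpa only [iterate_fixed ha] using hmono.iterate n hu.1
  obtain ⟨c, -, -, hlim⟩ := exists_tendsto_iterate_isFixedPt hmono
    (hmono.continuous_of_surjective g.surjective) hgu horbit
  have hmem (n : ℕ) : g^[n] u ∈ Icc a b := ⟨horbit n, (hanti n.zero_le).trans hu.2⟩
  have hback (n : ℕ) (x : X) : (g⁻¹ ^ n) (g^[n] x) = x := by
    rw [Equiv.Perm.iterate_eq_pow, inv_pow, Equiv.Perm.inv_eq_iff_eq]
  have hdist (n : ℕ) : dist (g u) u ≤ C * dist (g^[n + 1] u) (g^[n] u) := by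
    simpa only [hback n, iterate_succ_apply] using
      (hlip n).dist_le_mul _ (hmem (n + 1)) _ (hmem n)
  have hzero : Tendsto (fun n : ℕ => C * dist (g^[n + 1] u) (g^[n] u)) atTop (𝓝 0) := by
    simpa using ((hlim.comp (tendsto_add_atTop_nat 1)).dist hlim).const_mul (C : ℝ)
  exact dist_le_zero.1 (ge_of_tendsto' hzero hdist)

lemma apply_eq_self_of_lipschitzOnWith_zpow (hmono : StrictMono g) (ha : g a = a)
    (hlip : ∀ n : ℤ, LipschitzOnWith C ⇑(g ^ n) (Icc a b)) {u : X} (hu : u ∈ Icc a b) :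
    g u = u := by
  rcases le_total (g u) u with hgu | hgu
  · exact apply_eq_self_of_apply_le_of_lipschitzOnWith hmono.monotone ha hu hgu fun n => by
      simpa using hlip (-n)
  · have hmono_inv : Monotone ⇑g⁻¹ := fun x y hxy =>
      hmono.le_iff_le.1 (by simpa using hxy)
    refine (Equiv.Perm.inv_eq_iff_eq.1 ?_).symm
    refine apply_eq_self_of_apply_le_of_lipschitzOnWith hmono_inv (b := b) (C := C)
      (Equiv.Perm.inv_eq_iff_eq.2 ha.symm) hu ?_ fun n => ?_
    · exact hmono.le_iff_le.1 (by simpa using hgu)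
    · simpa using hlip n

end UniformlyLipschitz

/-- A form of Kopell's lemma. -/
theorem IsDiffI.apply_eq_self_of_commute {f g : Equiv.Perm ℝ} (hf : IsDiffI f)
    (hg : ∀ n : ℤ, IsDiffI (g ^ n)) (hcomm : Commute g f) {p : ℝ} (hfp : f p < p) (hgp : g p = p)
    {u : ℝ} (hu : u ∈ Icc (f p) p) : g u = u := by
  obtain ⟨C, hC⟩ := hf.exists_lipschitzOnWith_of_commute hfp
  have hgf (n : ℤ) : Function.Commute ⇑(g ^ n) f :=
    fun x => DFunLike.congr_fun (hcomm.zpow_left n).eq x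
  have hgfp : g (f p) = f p := by simpa [hgp] using (hgf 1).eq p
  refine apply_eq_self_of_lipschitzOnWith_zpow (by simpa using (hg 1).strictMono) hgfp
    (fun n => hC _ (hg n).strictMono ((hg n).2.1.of_le one_le_two) (hgf n) ?_) hu
  exact Equiv.Perm.zpow_apply_eq_self_of_apply_eq_self hgp n

section FullySupportedAction

variable {G : Type*} [Group G] {φ : G →* Equiv.Perm ℝ}

/-- The action of `G` on `ℝ` given by `φ` is fully supported on `[0, 1]`: no element acting
nontrivially fixes pointwise a nondegenerate subinterval of `[0, 1]`. -/
def IsFullySupported (φ : G →* Equiv.Perm ℝ) : Prop :=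
  ∀ k, φ k ≠ 1 → interior {x | x ∈ Icc (0 : ℝ) 1 ∧ φ k x = x} = ∅

lemma apply_eq_self_of_commute_of_apply_eq_self (hφ : ∀ k, IsDiffI (φ k))
    (hfull : IsFullySupported φ) {a b : G} (hcomm : Commute a b) (hb : φ b ≠ 1) {p : ℝ}
    (hp : φ b p = p) : φ a p = p := by
  have not_apply_lt {a : G} (hcomm : Commute a b) : ¬ φ a p < p := fun hlt => by
    have hpI := (hφ a).mem_Icc_of_apply_ne hlt.ne
    have hsub : Ioo (φ a p) p ⊆ interior {x | x ∈ Icc (0 : ℝ) 1 ∧ φ b x = x} :=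
      isOpen_Ioo.subset_interior_iff.2 fun u hu =>
        ⟨⟨((hφ a).mapsTo hpI).1.trans hu.1.le, hu.2.le.trans hpI.2⟩,
          (hφ a).apply_eq_self_of_commute (fun n => by simpa using hφ (b ^ n))
            (hcomm.symm.map φ) hlt hp (Ioo_subset_Icc_self hu)⟩
    rw [hfull b hb] at hsub
    exact (nonempty_Ioo.2 hlt).not_subset_empty hsub
  refine le_antisymm (not_lt.1 fun hgt => not_apply_lt hcomm.inv_left ?_)
    (not_lt.1 (not_apply_lt hcomm))
  rw [map_inv]
  exact (hφ a).strictMono.lt_iff_lt.1 (by simpa using hgt)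

theorem commute_of_commute_of_ne_one (hinj : Injective φ) (hφ : ∀ k, IsDiffI (φ k))
    (hfull : IsFullySupported φ) {f g h : G} (hf : f ≠ 1) (hfg : Commute f g) (hfh : Commute f h) :
    Commute g h := by
  have hne {k : G} (hk : k ≠ 1) : φ k ≠ 1 := (map_ne_one_iff φ hinj).2 hk
  let C := Subgroup.centralizer {f}
  let _ : MulAction C ℝ := .compHom ℝ (φ.comp C.subtype)
  have hC (c : C) : Commute (c : G) f := Subgroup.mem_centralizer_singleton_iff.1 c.2
  have hstab (y : ℝ) (hy : y ∉ MulAction.fixedPoints C ℝ) : MulAction.stabilizer C y = ⊥ := by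
    refine (Subgroup.eq_bot_iff_forall _).2 fun c hc => ?_
    by_contra hc1
    have hfy : φ f y = y := apply_eq_self_of_commute_of_apply_eq_self hφ hfull (hC c).symm
      (hne (by simpa using hc1)) hc
    exact hy fun d => apply_eq_self_of_commute_of_apply_eq_self hφ hfull (hC d) (hne hf) hfy
  obtain ⟨x, hx⟩ : ∃ x, φ f x ≠ x := by
    by_contra! hall
    exact hne hf (Equiv.ext hall)
  have hcomm := commute_of_stabilizer_eq_bot (fun c : C => (hφ c).strictMono) hstab
    (fun hfix => hx (hfix ⟨f, Subgroup.mem_centralizer_singleton_iff.2 rfl⟩))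
    ⟨g, Subgroup.mem_centralizer_singleton_iff.2 hfg.symm.eq⟩
    ⟨h, Subgroup.mem_centralizer_singleton_iff.2 hfh.symm.eq⟩
  exact hcomm.map C.subtype

end FullySupportedAction

section FreeGroupAutomorphisms

lemma commute_conj_of_apply_eq {G : Type*} [Group G] {a : MulAut G} {w : G} (h : a w = w) :
    Commute a (MulAut.conj w) := by
  ext x
  simp [h]

/- Evaluated at `xⱼ` and mapped to `SL(2, ℤ)` by `xᵢ ↦ S`, `xⱼ ↦ T`, the two compositions have
upper left entries that differ by `b * c ^ 2`. -/
lemma not_commute_conj_pow_conj_pow {α : Type*} {i j : α} (h : i ≠ j) {b c : ℕ} (hb : b ≠ 0)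
    (hc : c ≠ 0) : ¬ Commute (MulAut.conj (FreeGroup.of j) ^ b)
      (MulAut.conj (FreeGroup.of i * FreeGroup.of j * (FreeGroup.of i)⁻¹) ^ c) := by
  classical
  intro hcomm
  let ρ : FreeGroup α →* Matrix.SpecialLinearGroup (Fin 2) ℤ :=
    FreeGroup.lift fun k => if k = i then ModularGroup.S else ModularGroup.T
  have happly := DFunLike.congr_fun hcomm.eq (FreeGroup.of j)
  simp only [← map_pow, conj_pow, MulAut.mul_apply, MulAut.conj_apply] at happly
  have hentry := congrArg (fun w => (ρ w).1 0 0) happly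
  have hT (m : ℕ) : (↑(ModularGroup.T ^ m) : Matrix (Fin 2) (Fin 2) ℤ) = !![1, (m : ℤ); 0, 1] :=
    mod_cast ModularGroup.coe_T_zpow m
  simp [ρ, h.symm, hT, ModularGroup.coe_S, ModularGroup.coe_T, Matrix.adjugate_fin_two,
    -Matrix.SpecialLinearGroup.coe_pow] at hentry
  have hc0 : (c : ℤ) ≠ 0 := mod_cast hc
  refine hentry.elim hb fun hcc => pow_ne_zero 2 hc0 ?_
  linear_combination -hcc

variable {α : Type*} [DecidableEq α] {i j : α}

/-- The Nielsen transvection `xᵢ ↦ xᵢ xⱼ` of a free group, fixing the other generators. -/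
def nielsenTransvection (h : i ≠ j) : MulAut (FreeGroup α) :=
  MonoidHom.toMulEquiv
    (FreeGroup.lift (update FreeGroup.of i (FreeGroup.of i * FreeGroup.of j)))
    (FreeGroup.lift (update FreeGroup.of i (FreeGroup.of i * (FreeGroup.of j)⁻¹)))
    (by ext k; obtain rfl | hk := eq_or_ne k i <;> simp [h.symm, *])
    (by ext k; obtain rfl | hk := eq_or_ne k i <;> simp [h.symm, *])

lemma nielsenTransvection_apply_of_left (h : i ≠ j) :
    nielsenTransvection h (FreeGroup.of i) = FreeGroup.of i * FreeGroup.of j := by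
  simp [nielsenTransvection]

lemma nielsenTransvection_apply_of_right (h : i ≠ j) :
    nielsenTransvection h (FreeGroup.of j) = FreeGroup.of j := by
  simp [nielsenTransvection, h.symm]

lemma nielsenTransvection_pow_apply_of_left (h : i ≠ j) (m : ℕ) :
    (nielsenTransvection h ^ m) (FreeGroup.of i) = FreeGroup.of i * FreeGroup.of j ^ m := by
  induction m with
  | zero => simp
  | succ m ih =>
    rw [pow_succ', MulAut.mul_apply, ih, map_mul, map_pow, nielsenTransvection_apply_of_left,
      nielsenTransvection_apply_of_right, mul_assoc, pow_succ']

lemma nielsenTransvection_pow_ne_one (h : i ≠ j) {m : ℕ} (hm : m ≠ 0) :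
    nielsenTransvection h ^ m ≠ 1 := by
  intro heq
  have happly := nielsenTransvection_pow_apply_of_left h m
  rw [heq, MulAut.one_apply, left_eq_mul, pow_eq_one_iff_left hm] at happly
  exact FreeGroup.of_ne_one j happly

end FreeGroupAutomorphisms

theorem exists_commute_commute_not_commute_of_finiteIndex {α : Type*} [Nontrivial α]
    (K : Subgroup (MulAut (FreeGroup α))) [K.FiniteIndex] :
    ∃ f g h : K, f ≠ 1 ∧ Commute f g ∧ Commute f h ∧ ¬ Commute g h := by
  classical
  obtain ⟨i, j, hij⟩ := exists_pair_ne α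
  have exists_pow_mem (a : MulAut (FreeGroup α)) : ∃ m : ℕ, m ≠ 0 ∧ a ^ m ∈ K := by
    obtain ⟨m, hm, -, hmem⟩ :=
      Subgroup.exists_pow_mem_of_index_ne_zero (Subgroup.FiniteIndex.index_ne_zero (H := K)) a
    exact ⟨m, hm.ne', hmem⟩
  obtain ⟨a, ha, hf⟩ := exists_pow_mem (nielsenTransvection hij)
  obtain ⟨b, hb, hg⟩ := exists_pow_mem (MulAut.conj (FreeGroup.of j))
  obtain ⟨c, hc, hh⟩ :=
    exists_pow_mem (MulAut.conj (FreeGroup.of i * FreeGroup.of j * (FreeGroup.of i)⁻¹))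
  refine ⟨⟨_, hf⟩, ⟨_, hg⟩, ⟨_, hh⟩, ?_, ?_, ?_, ?_⟩
  · simpa [Subtype.ext_iff] using nielsenTransvection_pow_ne_one hij ha
  · exact Subtype.ext <|
      (commute_conj_of_apply_eq (nielsenTransvection_apply_of_right hij)).pow_pow a b
  · refine Subtype.ext <| (commute_conj_of_apply_eq ?_).pow_pow a c
    simp [nielsenTransvection_apply_of_left, nielsenTransvection_apply_of_right]
  · exact fun hcomm => not_commute_conj_pow_conj_pow hij hb hc (congrArg Subtype.val hcomm.eq)

theorem no_fully_supported_action_of_finite_index_aut_general {α : Type*} [Nontrivial α]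
    (K : Subgroup (MulAut (FreeGroup α))) [K.FiniteIndex] :
    ¬ ∃ φ : K →* Equiv.Perm ℝ, Injective φ ∧ (∀ k, IsDiffI (φ k)) ∧ IsFullySupported φ := by
  rintro ⟨φ, hinj, hφ, hfull⟩
  obtain ⟨f, g, h, hf, hfg, hfh, hgh⟩ := exists_commute_commute_not_commute_of_finiteIndex K
  exact hgh (commute_of_commute_of_ne_one hinj hφ hfull hf hfg hfh)

/-- **No fully supported faithful C² actions of finite-index subgroups of `Aut(Fₙ)` on
the interval.** For `n ≥ 6` and `K` a finite-index subgroup of `Aut(Fₙ)`, there is no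
injective homomorphism `φ` from `K` into `Diff²₊(I)` such that no nontrivial element
of the image fixes pointwise a nondegenerate interval (i.e., such that each nontrivial
`φ k` has fixed point set of empty interior in `[0,1]`). -/
theorem no_fully_supported_action_of_finite_index_aut (n : ℕ) (hn : 6 ≤ n)
    (K : Subgroup (MulAut (FreeGroup (Fin n)))) (hK : K.FiniteIndex) :
    ¬ ∃ φ : K →* Equiv.Perm ℝ,
        Function.Injective φ ∧ (∀ k, IsDiffI (φ k)) ∧
        ∀ k : K, φ k ≠ 1 →
          interior {x | x ∈ Set.Icc (0 : ℝ) 1 ∧ (φ k) x = x} = ∅ := by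
  have : Nontrivial (Fin n) := Fin.nontrivial_iff_two_le.2 (by omega)
  exact no_fully_supported_action_of_finite_index_aut_general K
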